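/- Let k be a positive integer such that Σ_{n ≥ -k} ℓ_{n,k}² < ∞. Then for every real t the series Σ_{n ≥ -k} ℓ_{n,k} ((1/2 - it)/(1/2 + it))^n converges and its sum equals ζ(1/2 + it)^k. -/

import Mathlib

open scoped Real Topology
open Complex Filter MeasureTheory Finset Asymptotics

/-- The analytic extension of `s ↦ ((s-1) * ζ(s))^k` to `s = 1` (where its value is `1`). -/
noncomputable def zetaPowAux (k : ℕ) : ℂ → ℂ :=
  Function.update (fun s : ℂ => ((s - 1) * riemannZeta s) ^ k) 1 1

/-- `lam k j` is the Taylor coefficient `λ_{j,k}`, i.e. the `j`-th derivative at `s = 1` of the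
analytic extension of `(s-1)^k ζ(s)^k`; these numbers are real, and we record their real part. -/
noncomputable def lam (k j : ℕ) : ℝ :=
  (iteratedDeriv j (zetaPowAux k) 1).re

/-- The Fourier coefficients `ℓ_{n,k}` for `n ≥ -k` (an integer index). -/
noncomputable def ell (k : ℕ) (n : ℤ) : ℝ :=
  if 1 ≤ n then
    (-1 : ℝ) ^ n.toNat *
      ∑ j ∈ Finset.Icc 1 n.toNat,
        ((n.toNat - 1).choose (j - 1) : ℝ) * lam k (j + k) / (Nat.factorial (j + k))
  else
    (-1 : ℝ) ^ k *
      ∑ j ∈ Finset.range ((k + n).toNat + 1),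
        ((k - j).choose (-n).toNat : ℝ) * (-1 : ℝ) ^ j * lam k j / (Nat.factorial j)

/-- The Lindelöf Hypothesis: `ζ(1/2 + it) = O(|t|^ε)` for every `ε > 0`. -/
def LindelofHypothesis : Prop :=
  ∀ ε : ℝ, 0 < ε → ∃ C : ℝ, ∀ t : ℝ, 1 ≤ |t| →
    ‖riemannZeta (1 / 2 + t * Complex.I)‖ ≤ C * |t| ^ ε

/-- `dk k n` is the Piltz divisor function `d_k(n)`: the number of representations of `n` as an
ordered product of `k` positive integers (the `k`-th Dirichlet-convolution power of `ζ`). -/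
noncomputable def dk (k n : ℕ) : ℕ := (ArithmeticFunction.zeta ^ k) n

/-- The coefficients `a_{j,k}` of the polynomial `P_k`. -/
noncomputable def aCoef (k j : ℕ) : ℝ :=
  (-1 : ℝ) ^ (k - 1 - j) *
    ∑ i ∈ Finset.range (k - 1 - j + 1), (-1 : ℝ) ^ i * lam k i / (Nat.factorial i)

/-- The error term `Δ_k(x) = (Σ_{1 ≤ n ≤ x} d_k(n)) - x P_k(log x)` in the Piltz divisor
problem. -/
noncomputable def Deltak (k : ℕ) (x : ℝ) : ℝ :=
  (∑ n ∈ Finset.Icc 1 ⌊x⌋₊, (dk k n : ℝ)) -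
    x * ∑ j ∈ Finset.range k, aCoef k j / (Nat.factorial j) * (Real.log x) ^ j

/-- The `n`-th Laguerre polynomial. -/
noncomputable def laguerre (n : ℕ) (u : ℝ) : ℝ :=
  ∑ j ∈ Finset.range (n + 1), (n.choose j : ℝ) * (-1 : ℝ) ^ j * u ^ j / (Nat.factorial j)

/-- The Bessel function of the first kind of order `0`. -/
noncomputable def besselJ0 (u : ℝ) : ℝ :=
  ∑' m : ℕ, (-1 : ℝ) ^ m * (u / 2) ^ (2 * m) / ((Nat.factorial m : ℝ) ^ 2)

/-- `φ_k(x) = ∫_1^∞ Δ_k(r) J₀(2 √(x log r)) r⁻² dr`. -/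
noncomputable def phik (k : ℕ) (x : ℝ) : ℝ :=
  ∫ r in Set.Ioi (1 : ℝ), Deltak k r * besselJ0 (2 * Real.sqrt (x * Real.log r)) / r ^ 2

lemma integral_exp_int_mul_I (m : ℤ) :
    ∫ θ in (0 : ℝ)..2 * π, Complex.exp (m * θ * I) = if m = 0 then 2 * π else 0 := by
  split_ifs with hm
  · simp [hm]
  · have hc : (m : ℂ) * I ≠ 0 := mul_ne_zero (by exact_mod_cast hm) I_ne_zero
    have := integral_exp_mul_complex (a := 0) (b := 2 * π) hc
    simp_rw [mul_right_comm _ I] at this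
    rw [this]
    have h1 : (m : ℂ) * ((2 * π : ℝ) : ℂ) * I = m * (2 * π * I) := by push_cast; ring
    rw [h1, Complex.exp_int_mul_two_pi_mul_I]
    simp

/-- Parseval's identity for an absolutely convergent one-sided Fourier series. -/
lemma hasSum_norm_sq_of_hasSum_exp {c : ℕ → ℂ} (hc : Summable fun n => ‖c n‖) {g : ℝ → ℂ}
    (hg : ∀ θ : ℝ, HasSum (fun n => c n * Complex.exp (n * θ * I)) (g θ)) :
    HasSum (fun n => ‖c n‖ ^ 2) ((2 * π)⁻¹ * ∫ θ in (0 : ℝ)..2 * π, ‖g θ‖ ^ 2) := by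
  have hnorm : ∀ (m : ℤ) (θ : ℝ), ‖Complex.exp (m * θ * I)‖ = 1 := fun m θ => by
    simpa using Complex.norm_exp_ofReal_mul_I (m * θ)
  have hnorm' : ∀ (m : ℕ) (θ : ℝ), ‖Complex.exp (m * θ * I)‖ = 1 := fun m θ => by
    simpa using hnorm m θ
  have hcont : Continuous g := by
    rw [show g = fun θ : ℝ => ∑' n, c n * Complex.exp (n * θ * I) from
      funext fun θ => (hg θ).tsum_eq.symm]
    exact continuous_tsum (fun n => by fun_prop) hc fun n θ => by simp [hnorm']
  have hpi : (0 : ℝ) < 2 * π := by positivity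
  have hmem : MemLp g 2 (volume.restrict (Set.Ioc 0 (2 * π))) := by
    obtain ⟨C, hC⟩ := (isCompact_Icc (a := (0 : ℝ)) (b := 2 * π)).exists_bound_of_continuousOn
      hcont.continuousOn
    refine MemLp.of_bound hcont.aestronglyMeasurable C ?_
    filter_upwards [ae_restrict_mem measurableSet_Ioc] with x hx
    exact hC x (Set.Ioc_subset_Icc_self hx)
  have key := hasSum_sq_fourierCoeffOn hpi hmem
  have hcoef : ∀ m : ℤ, fourierCoeffOn hpi g m = ∑' n : ℕ, if (n : ℤ) = m then c n else 0 := by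
    intro m
    rw [fourierCoeffOn_eq_integral]
    have h1 : HasSum (fun n : ℕ => ∫ θ in (0 : ℝ)..2 * π,
        c n * Complex.exp (((n - m : ℤ) : ℂ) * θ * I))
        (∫ θ in (0 : ℝ)..2 * π, fourier (-m) (θ : AddCircle (2 * π - 0)) • g θ) := by
      refine intervalIntegral.hasSum_integral_of_dominated_convergence (fun n _ => ‖c n‖)
        (fun n => (Continuous.aestronglyMeasurable (by fun_prop)))
        (fun n => Eventually.of_forall fun θ _ => ?_) (Eventually.of_forall fun θ _ => hc)
        (by simp) (Eventually.of_forall fun θ _ => ?_)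
      · rw [norm_mul, hnorm, mul_one]
      · rw [smul_eq_mul, fourier_coe_apply]
        convert! (hg θ).mul_left _ using 2 with n
        rw [mul_left_comm, ← Complex.exp_add]
        congr 2
        have : (π : ℂ) ≠ 0 := by exact_mod_cast Real.pi_ne_zero
        push_cast
        field_simp
        ring
    rw [← h1.tsum_eq, ← tsum_const_smul'' (1 / (2 * π - 0))]
    refine tsum_congr fun n => ?_
    rw [intervalIntegral.integral_const_mul, integral_exp_int_mul_I]
    have : (π : ℂ) ≠ 0 := by exact_mod_cast Real.pi_ne_zero
    simp only [sub_eq_zero]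
    split_ifs
    · rw [Complex.real_smul]; push_cast; field_simp; simp
    · simp
  have hnat : ∀ n : ℕ, fourierCoeffOn hpi g n = c n := fun n => by
    rw [hcoef, tsum_eq_single n (by intro b hb; simp [hb])]
    simp
  have := (Function.Injective.hasSum_iff (f := fun i : ℤ => ‖fourierCoeffOn hpi g i‖ ^ 2)
    (Nat.cast_injective (R := ℤ)) (fun m hm => ?_)).2 key
  · simpa [Function.comp_def, hnat] using this
  · have : ∀ n : ℕ, (n : ℤ) ≠ m := fun n h => hm ⟨n, h⟩
    simp [hcoef, this]

lemma hasSum_norm_sq_circle {a : ℕ → ℂ} {f : ℂ → ℂ}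
    (hf : ∀ z, ‖z‖ < 1 → HasSum (fun n => a n * z ^ n) (f z)) {r : ℝ} (hr0 : 0 ≤ r) (hr : r < 1) :
    HasSum (fun n => ‖a n‖ ^ 2 * r ^ (2 * n))
      ((2 * π)⁻¹ * ∫ θ in (0 : ℝ)..2 * π, ‖f (r * Complex.exp (θ * I))‖ ^ 2) := by
  have hrn : ‖(r : ℂ)‖ < 1 := by simpa [abs_of_nonneg hr0] using hr
  have := hasSum_norm_sq_of_hasSum_exp (c := fun n => a n * (r : ℂ) ^ n)
    (g := fun θ => f (r * Complex.exp (θ * I))) (hf _ hrn).summable.norm fun θ => ?_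
  · convert! this using 2 with n
    rw [norm_mul, norm_pow, Complex.norm_real, Real.norm_of_nonneg hr0]
    ring
  · convert! hf (r * Complex.exp (θ * I)) ?_ using 2 with n
    · rw [mul_pow, ← Complex.exp_nat_mul]
      ring_nf
    · simpa [Complex.norm_exp_ofReal_mul_I] using hrn

/-- A power series with square-summable coefficients converges at each point of the unit circle
at which its sum extends to a complex differentiable function. -/
theorem tendsto_sum_of_summable_sq {a : ℕ → ℂ} {f : ℂ → ℂ} {w : ℂ} (hw : ‖w‖ = 1)
    (hf : ∀ z, ‖z‖ < 1 → HasSum (fun n => a n * z ^ n) (f z))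
    (hcont : ContinuousOn f (Metric.ball 0 1))
    (ha : Summable fun n => ‖a n‖ ^ 2) (hd : DifferentiableAt ℂ f w) :
    Tendsto (fun N : ℕ => ∑ n ∈ range N, a n * w ^ n) atTop (𝓝 (f w)) := by
  have hw0 : w ≠ 0 := by rintro rfl; simp at hw
  set a' : ℕ → ℂ := fun n => a n - if n = 0 then f w else 0 with ha'
  set b : ℕ → ℂ := fun N => ∑ i ∈ range (N + 1), a' i * -(w⁻¹ ^ (N - i + 1)) with hb
  have hne : ∀ z : ℂ, ‖z‖ < 1 → z ≠ w := by rintro z hz rfl; linarith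
  have hb_eq : ∀ N, b N = -(w⁻¹ ^ (N + 1)) * (∑ n ∈ range (N + 1), a n * w ^ n - f w) := by
    intro N
    have : ∑ n ∈ range (N + 1), a n * w ^ n - f w = ∑ n ∈ range (N + 1), a' n * w ^ n := by
      simp [ha', sub_mul, Finset.sum_sub_distrib, ite_mul]
    rw [this, Finset.mul_sum]
    refine Finset.sum_congr rfl fun i hi => ?_
    have hi' : i ≤ N := by simpa [Nat.lt_succ_iff] using hi
    obtain ⟨j, rfl⟩ := Nat.exists_eq_add_of_le hi'
    rw [show i + j - i = j by omega, show i + j + 1 = i + (j + 1) by ring, pow_add w⁻¹ i (j + 1)]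
    have : w⁻¹ ^ i * w ^ i = 1 := by rw [← mul_pow, inv_mul_cancel₀ hw0, one_pow]
    linear_combination (-a' i * w⁻¹ ^ (j + 1)) * -this
  have hb_norm : ∀ N, ‖b N‖ = ‖∑ n ∈ range (N + 1), a n * w ^ n - f w‖ := by
    intro N; rw [hb_eq]; simp [hw]
  have hslope : ∀ z, ‖z‖ < 1 → HasSum (fun n => b n * z ^ n) (dslope f w z) := by
    intro z hz
    have h1 : HasSum (fun n => a' n * z ^ n) (f z - f w) := by
      have := (hf z hz).sub (hasSum_ite_eq 0 (f w))
      convert! this using 2 with n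
      by_cases hn : n = 0 <;> simp [ha', hn]
    have hzw : ‖z * w⁻¹‖ < 1 := by simpa [hw] using hz
    have h2 : HasSum (fun n => -(w⁻¹ ^ (n + 1)) * z ^ n) ((z - w)⁻¹) := by
      have := (hasSum_geometric_of_norm_lt_one hzw).mul_left (-w⁻¹)
      convert! this using 1
      · ext n; rw [mul_pow]; ring
      · have := sub_ne_zero.2 (hne z hz)
        have h3 : 1 - z * w⁻¹ = -w⁻¹ * (z - w) := by field_simp; ring
        rw [h3, mul_inv, ← mul_assoc, mul_inv_cancel₀ (by simpa using hw0), one_mul]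
    have h3 := hasSum_sum_range_mul_of_summable_norm h1.summable.norm h2.summable.norm
    rw [h1.tsum_eq, h2.tsum_eq] at h3
    rw [dslope_of_ne _ (hne z hz), slope_def_field, div_eq_mul_inv]
    convert! h3 using 2 with n
    rw [hb, Finset.sum_mul]
    refine Finset.sum_congr rfl fun i hi => ?_
    have hi' : i ≤ n := by simpa [Nat.lt_succ_iff] using hi
    conv_lhs => rw [← Nat.add_sub_of_le hi', pow_add]
    rw [show i + (n - i) - i = n - i by omega]
    ring
  obtain ⟨B, C, hB, hC, hbound⟩ : ∃ B C : ℝ, 0 ≤ B ∧ 0 ≤ C ∧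
      ∀ z, ‖dslope f w z‖ ^ 2 ≤ B + C * ‖f z‖ ^ 2 := by
    have hca : ContinuousAt (dslope f w) w := continuousAt_dslope_same.2 hd
    have hev := hca.norm.eventually_lt_const (lt_add_one ‖dslope f w w‖)
    obtain ⟨ε, hε, hball⟩ := Metric.eventually_nhds_iff.1 hev
    set D := ‖dslope f w w‖ + 1
    refine ⟨D ^ 2 + 2 * ‖f w‖ ^ 2 / ε ^ 2, 2 / ε ^ 2, by positivity, by positivity, fun z => ?_⟩
    rcases lt_or_ge (dist z w) ε with hz | hz
    · have := hball hz
      have h1 : ‖dslope f w z‖ ^ 2 ≤ D ^ 2 := by gcongr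
      have h2 : 0 ≤ 2 * ‖f w‖ ^ 2 / ε ^ 2 := by positivity
      have h3 : 0 ≤ 2 / ε ^ 2 * ‖f z‖ ^ 2 := by positivity
      linarith
    · have hzw : z ≠ w := by rintro rfl; simp at hz; linarith
      rw [dslope_of_ne _ hzw, slope_def_field, norm_div, ← dist_eq_norm z w, div_pow]
      have h1 : ‖f z - f w‖ ^ 2 ≤ 2 * (‖f z‖ ^ 2 + ‖f w‖ ^ 2) := by
        have := norm_sub_le (f z) (f w)
        nlinarith [norm_nonneg (f z - f w), sq_nonneg (‖f z‖ - ‖f w‖)]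
      calc ‖f z - f w‖ ^ 2 / dist z w ^ 2 ≤ 2 * (‖f z‖ ^ 2 + ‖f w‖ ^ 2) / ε ^ 2 := by gcongr
        _ = 2 * ‖f w‖ ^ 2 / ε ^ 2 + 2 / ε ^ 2 * ‖f z‖ ^ 2 := by ring
        _ ≤ _ := by nlinarith [sq_nonneg D]
  set A := ∑' n, ‖a n‖ ^ 2
  have hpi : (0 : ℝ) < 2 * π := by positivity
  have hcircle : ∀ (r : ℝ), 0 ≤ r → r < 1 → ∀ N,
      ∑ n ∈ range N, ‖b n‖ ^ 2 * r ^ (2 * n) ≤ B + C * A := by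
    intro r hr0 hr N
    have e1 := hasSum_norm_sq_circle hslope hr0 hr
    have e2 := hasSum_norm_sq_circle hf hr0 hr
    have hnr : ∀ θ : ℝ, ‖(r : ℂ) * Complex.exp (θ * I)‖ < 1 := fun θ => by
      simpa [Complex.norm_exp_ofReal_mul_I, abs_of_nonneg hr0] using hr
    have hfr : Continuous fun θ : ℝ => f (r * Complex.exp (θ * I)) :=
      hcont.comp_continuous (by fun_prop) fun θ => mem_ball_zero_iff.2 (hnr θ)
    have hsc : Continuous fun θ : ℝ => dslope f w (r * Complex.exp (θ * I)) := by
      simp_rw [fun θ => dslope_of_ne f (hne _ (hnr θ)), slope_def_field]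
      exact (hfr.sub continuous_const).div (by fun_prop) fun θ => sub_ne_zero.2 (hne _ (hnr θ))
    have hA : ∑' n, ‖a n‖ ^ 2 * r ^ (2 * n) ≤ A := by
      refine e2.summable.tsum_le_tsum (fun n => ?_) ha
      exact mul_le_of_le_one_right (by positivity) (pow_le_one₀ hr0 hr.le)
    calc ∑ n ∈ range N, ‖b n‖ ^ 2 * r ^ (2 * n)
        ≤ (2 * π)⁻¹ * ∫ θ in (0 : ℝ)..2 * π, ‖dslope f w (r * Complex.exp (θ * I))‖ ^ 2 :=
          sum_le_hasSum _ (fun n _ => by positivity) e1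
      _ ≤ (2 * π)⁻¹ * ∫ θ in (0 : ℝ)..2 * π, (B + C * ‖f (r * Complex.exp (θ * I))‖ ^ 2) := by
          gcongr
          refine intervalIntegral.integral_mono_on hpi.le ?_ ?_ fun θ _ => hbound _
          · exact (hsc.norm.pow 2).intervalIntegrable _ _
          · exact (continuous_const.add (continuous_const.mul (hfr.norm.pow 2))).intervalIntegrable _ _
      _ = B + C * ((2 * π)⁻¹ * ∫ θ in (0 : ℝ)..2 * π, ‖f (r * Complex.exp (θ * I))‖ ^ 2) := by
          have hint : IntervalIntegrable (fun θ : ℝ => C * ‖f (r * Complex.exp (θ * I))‖ ^ 2)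
              volume 0 (2 * π) := (continuous_const.mul (hfr.norm.pow 2)).intervalIntegrable _ _
          rw [intervalIntegral.integral_add (by simp) hint,
            intervalIntegral.integral_const_mul, intervalIntegral.integral_const]
          rw [sub_zero, smul_eq_mul, mul_add, inv_mul_cancel_left₀ hpi.ne', mul_left_comm]
      _ ≤ B + C * A := by
          rw [← e2.tsum_eq]; gcongr
  have hbs : Summable fun n => ‖b n‖ ^ 2 := by
    refine summable_of_sum_range_le (c := B + C * A) (fun n => by positivity) fun N => ?_
    have ht : Tendsto (fun r : ℝ => ∑ n ∈ range N, ‖b n‖ ^ 2 * r ^ (2 * n)) (𝓝[<] 1)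
        (𝓝 (∑ n ∈ range N, ‖b n‖ ^ 2 * 1 ^ (2 * n))) :=
      (Continuous.tendsto (by fun_prop) _).mono_left nhdsWithin_le_nhds
    simp only [one_pow, mul_one] at ht
    refine le_of_tendsto ht ?_
    filter_upwards [Ioo_mem_nhdsLT (show (0 : ℝ) < 1 by norm_num)] with r hr
    exact hcircle r hr.1.le hr.2 N
  have hb0 : Tendsto (fun n => ‖b n‖) atTop (𝓝 0) := by
    have := hbs.tendsto_atTop_zero.sqrt
    simpa using this
  rw [← tendsto_add_atTop_iff_nat 1, tendsto_iff_norm_sub_tendsto_zero]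
  simpa only [hb_norm] using hb0

lemma zetaPowAux_eq (k : ℕ) : zetaPowAux k = fun s => riemannZeta₁ s ^ k := by
  ext s
  rcases eq_or_ne s 1 with rfl | hs
  · simp [zetaPowAux]
  · rw [zetaPowAux, Function.update_of_ne hs, riemannZeta_eq_inv_sub_mul hs,
      mul_inv_cancel_left₀ (sub_ne_zero.2 hs)]

lemma differentiable_zetaPowAux (k : ℕ) : Differentiable ℂ (zetaPowAux k) := by
  rw [zetaPowAux_eq]
  exact differentiable_riemannZeta₁.pow k

lemma zetaPowAux_conj (k : ℕ) (s : ℂ) :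
    zetaPowAux k (starRingEnd ℂ s) = starRingEnd ℂ (zetaPowAux k s) := by
  rcases eq_or_ne s 1 with rfl | hs
  · simp [zetaPowAux]
  · have hs' : starRingEnd ℂ s ≠ 1 := (map_ne_one_iff _ (starRingEnd ℂ).injective).mpr hs
    rw [zetaPowAux, Function.update_of_ne hs, Function.update_of_ne hs']
    simp

lemma iteratedDeriv_conj_of_conj {f : ℂ → ℂ}
    (hf : ∀ s, f (starRingEnd ℂ s) = starRingEnd ℂ (f s)) (j : ℕ) (s : ℂ) :
    iteratedDeriv j f (starRingEnd ℂ s) = starRingEnd ℂ (iteratedDeriv j f s) := by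
  induction j generalizing s with
  | zero => simpa using hf s
  | succ j ih =>
    rw [iteratedDeriv_succ]
    have h : starRingEnd ℂ ∘ iteratedDeriv j f ∘ starRingEnd ℂ = iteratedDeriv j f := by
      ext x; simp [ih]
    conv_lhs => rw [← h]
    rw [deriv_conj_conj]
    simp

lemma ofReal_lam (k j : ℕ) : (lam k j : ℂ) = iteratedDeriv j (zetaPowAux k) 1 := by
  have := iteratedDeriv_conj_of_conj (zetaPowAux_conj k) j 1
  rw [map_one] at this
  exact Complex.conj_eq_iff_re.1 this.symm

lemma hasSum_zetaPowAux (k : ℕ) (s : ℂ) :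
    HasSum (fun j : ℕ => ((lam k j / j.factorial : ℝ) : ℂ) * (s - 1) ^ j) (zetaPowAux k s) := by
  convert! Complex.hasSum_taylorSeries_of_entire (differentiable_zetaPowAux k) 1 s using 2 with j
  rw [← ofReal_lam]
  push_cast
  simp only [smul_eq_mul]
  ring

/-- The coefficient of `z ^ i` in the binomial expansion of `(1 + z) ^ (k - j)`, where the exponent
is an integer that may be negative. -/
noncomputable def binomCoeff (k j i : ℕ) : ℝ :=
  if j ≤ k then ((k - j).choose i : ℝ)
  else (-1) ^ i * ((i + (j - k - 1)).choose (j - k - 1) : ℝ)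

lemma hasSum_choose_mul_pow (n : ℕ) {𝕜 : Type*} [NormedField 𝕜] (z : 𝕜) :
    HasSum (fun i : ℕ => (n.choose i : 𝕜) * z ^ i) ((1 + z) ^ n) := by
  have : (1 + z) ^ n = ∑ i ∈ range (n + 1), (n.choose i : 𝕜) * z ^ i := by
    rw [add_comm, add_pow]
    exact Finset.sum_congr rfl fun i _ => by rw [one_pow, mul_one, mul_comm]
  rw [this]
  refine hasSum_sum_of_ne_finset_zero fun i hi => ?_
  rw [Nat.choose_eq_zero_of_lt (by simpa using hi)]
  simp

lemma one_add_ne_zero_of_norm_lt_one {z : ℂ} (hz : ‖z‖ < 1) : 1 + z ≠ 0 := by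
  intro h
  have := congrArg norm (eq_neg_of_add_eq_zero_right h)
  rw [norm_neg, norm_one] at this
  linarith

lemma hasSum_binomCoeff (k j : ℕ) {z : ℂ} (hz : ‖z‖ < 1) :
    HasSum (fun i => (binomCoeff k j i : ℂ) * z ^ i) ((1 + z) ^ k * ((1 + z) ^ j)⁻¹) := by
  have h1 := one_add_ne_zero_of_norm_lt_one hz
  rcases le_or_gt j k with hjk | hjk
  · obtain ⟨d, rfl⟩ := Nat.exists_eq_add_of_le hjk
    convert! hasSum_choose_mul_pow d z using 1
    · ext i; simp [binomCoeff]
    · rw [pow_add]; field_simp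
  · obtain ⟨d, rfl⟩ := Nat.exists_eq_add_of_lt hjk
    convert! hasSum_choose_mul_geometric_of_norm_lt_one d (r := -z) (by simpa using hz) using 1
    · ext i
      rw [binomCoeff, if_neg (by omega), show k + d + 1 - k - 1 = d by omega, neg_pow z]
      push_cast
      ring
    · rw [sub_neg_eq_add, add_assoc, pow_add]; field_simp

lemma hasSum_abs_binomCoeff_le (k j : ℕ) {x : ℝ} (hx0 : 0 ≤ x) (hx : x < 1) :
    ∃ S ≤ 2 ^ k * ((1 - x)⁻¹) ^ j, HasSum (fun i => |binomCoeff k j i| * x ^ i) S := by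
  have hx1 : 1 ≤ (1 - x)⁻¹ := (one_le_inv₀ (by linarith)).2 (by linarith)
  rcases le_or_gt j k with hjk | hjk
  · refine ⟨(1 + x) ^ (k - j), ?_, ?_⟩
    · calc (1 + x) ^ (k - j) ≤ 2 ^ (k - j) := by gcongr; linarith
        _ ≤ 2 ^ k := by gcongr; · norm_num
                        · omega
        _ ≤ _ := le_mul_of_one_le_right (by positivity) (one_le_pow₀ hx1)
    · simpa [binomCoeff, hjk] using hasSum_choose_mul_pow (k - j) x
  · obtain ⟨d, rfl⟩ := Nat.exists_eq_add_of_lt hjk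
    refine ⟨1 / (1 - x) ^ (d + 1), ?_, ?_⟩
    · rw [one_div, ← inv_pow]
      calc (1 - x)⁻¹ ^ (d + 1) ≤ (1 - x)⁻¹ ^ (k + d + 1) := pow_le_pow_right₀ hx1 (by omega)
        _ ≤ _ := le_mul_of_one_le_left (by positivity) (one_le_pow₀ (by norm_num))
    · convert! hasSum_choose_mul_geometric_of_norm_lt_one d (r := x)
        (by rwa [Real.norm_of_nonneg hx0]) using 1
      ext i
      rw [binomCoeff, if_neg (by omega), show k + d + 1 - k - 1 = d by omega, abs_mul, abs_pow,
        abs_neg, abs_one, one_pow, one_mul, Nat.abs_cast]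

lemma ell_sub_eq (k m : ℕ) :
    ell k ((m : ℤ) - k) = (-1) ^ k *
      ∑ j ∈ range (m + 1), (-1) ^ j * (lam k j / j.factorial) * binomCoeff k j (m - j) := by
  rcases le_or_gt m k with hmk | hmk
  · rw [ell, if_neg (by omega)]
    congr 1
    rw [show ((k : ℤ) + (m - k)).toNat = m by omega, show (-((m : ℤ) - k)).toNat = k - m by omega]
    refine Finset.sum_congr rfl fun j hj => ?_
    have hj' : j ≤ m := by simpa [Nat.lt_succ_iff] using hj
    rw [binomCoeff, if_pos (by omega),
      Nat.choose_symm_of_eq_add (show k - j = k - m + (m - j) by omega)]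
    ring
  · obtain ⟨d, rfl⟩ := Nat.exists_eq_add_of_lt hmk
    have hzero : ∑ j ∈ range (k + 1),
        (-1) ^ j * (lam k j / j.factorial) * binomCoeff k j (k + d + 1 - j) = 0 := by
      refine Finset.sum_eq_zero fun j hj => ?_
      have hj' : j ≤ k := by simpa [Nat.lt_succ_iff] using hj
      rw [binomCoeff, if_pos hj', Nat.choose_eq_zero_of_lt (by omega)]
      simp
    rw [ell, if_pos (by omega), show (((k + d + 1 : ℕ) : ℤ) - k).toNat = d + 1 by omega,
      show k + d + 1 + 1 = (k + 1) + (d + 1) by ring, Finset.sum_range_add,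
      hzero, zero_add, ← Finset.Ico_add_one_right_eq_Icc, Finset.sum_Ico_eq_sum_range,
      Finset.mul_sum, Finset.mul_sum]
    · refine Finset.sum_congr rfl fun j hj => ?_
      have hj' : j ≤ d := by simpa [Nat.lt_succ_iff] using hj
      obtain ⟨e, rfl⟩ := Nat.exists_eq_add_of_le hj'
      rw [binomCoeff, if_neg (by omega), show k + (j + e) + 1 - (k + 1 + j) = e by omega,
        show k + 1 + j - k - 1 = j by omega, show 1 + j - 1 = j by omega,
        show j + e + 1 - 1 = e + j by omega, show 1 + j + k = k + 1 + j by ring]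
      have : ((-1 : ℝ) ^ k) * (-1) ^ k = 1 := by rw [← mul_pow]; simp
      simp only [pow_add, pow_one]
      linear_combination (-((-1) ^ j * (-1) ^ e * ((e + j).choose j : ℝ) * lam k (k + 1 + j)
        / (k + 1 + j).factorial)) * -this

/-- The function `z ^ k * ζ(1 / (1 + z)) ^ k`, extended analytically to `z = 0`. -/
noncomputable def zetaDisc (k : ℕ) (z : ℂ) : ℂ :=
  (-1) ^ k * ((1 + z) ^ k * zetaPowAux k (1 + z)⁻¹)

lemma differentiableAt_zetaDisc (k : ℕ) {z : ℂ} (hz : 1 + z ≠ 0) :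
    DifferentiableAt ℂ (zetaDisc k) z := by
  unfold zetaDisc
  have h1 : DifferentiableAt ℂ (fun z : ℂ => (1 + z)⁻¹) z := by fun_prop (disch := exact hz)
  have h2 : DifferentiableAt ℂ (fun z : ℂ => zetaPowAux k (1 + z)⁻¹) z :=
    (differentiable_zetaPowAux k _).comp z h1
  fun_prop

lemma hasSum_sum_range_of_hasSum_prod {F : ℕ × ℕ → ℂ} {S : ℂ} (hF : HasSum F S) :
    HasSum (fun m => ∑ j ∈ range (m + 1), F (j, m - j)) S := by
  have hanti := ((Equiv.hasSum_iff Finset.HasAntidiagonal.sigmaAntidiagonalEquivProd).2 hF).sigma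
    fun m => hasSum_fintype _
  convert! hanti using 2 with m
  rw [← Finset.Nat.sum_antidiagonal_eq_sum_range_succ_mk, ← Finset.sum_attach,
    Finset.univ_eq_attach]
  rfl

/-- The terms of the double series obtained by expanding `zetaDisc k z` in powers of
`(1 + z)⁻¹ - 1`, and then each of these powers, times `(1 + z) ^ k`, in powers of `z`. -/
noncomputable def zetaDiscTerm (k : ℕ) (z : ℂ) (p : ℕ × ℕ) : ℂ :=
  (-1) ^ k * ((-1) ^ p.1 * ((lam k p.1 / p.1.factorial : ℝ) : ℂ) * z ^ p.1 *
    ((binomCoeff k p.1 p.2 : ℂ) * z ^ p.2))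

lemma summable_zetaDiscTerm (k : ℕ) {z : ℂ} (hz : ‖z‖ < 1) : Summable (zetaDiscTerm k z) := by
  rw [← summable_norm_iff, summable_prod_of_nonneg (fun _ => norm_nonneg _)]
  choose S hS hSum using fun j => hasSum_abs_binomCoeff_le k j (norm_nonneg z) hz
  have hrow : ∀ j, HasSum (fun i => ‖zetaDiscTerm k z (j, i)‖)
      (|lam k j / j.factorial| * ‖z‖ ^ j * S j) := fun j => by
    convert! (hSum j).mul_left (|lam k j / j.factorial| * ‖z‖ ^ j) using 2 with i
    simp only [zetaDiscTerm, norm_mul, norm_pow, norm_neg, norm_one, one_pow, one_mul,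
      Complex.norm_real, Real.norm_eq_abs]
  refine ⟨fun j => (hrow j).summable, ?_⟩
  simp_rw [fun j => (hrow j).tsum_eq]
  have hent := (hasSum_zetaPowAux k (1 + ((‖z‖ * (1 - ‖z‖)⁻¹ : ℝ) : ℂ))).summable.norm
  refine Summable.of_nonneg_of_le (fun j => (hrow j).nonneg fun i => norm_nonneg _) (fun j => ?_)
    (hent.mul_left (2 ^ k))
  have hpos : 0 ≤ ‖z‖ * (1 - ‖z‖)⁻¹ :=
    mul_nonneg (norm_nonneg z) (inv_nonneg.2 (by linarith))
  rw [add_sub_cancel_left, norm_mul, norm_pow, Complex.norm_real, Complex.norm_real,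
    Real.norm_of_nonneg hpos, mul_pow, Real.norm_eq_abs]
  calc |lam k j / j.factorial| * ‖z‖ ^ j * S j
      ≤ |lam k j / j.factorial| * ‖z‖ ^ j * (2 ^ k * ((1 - ‖z‖)⁻¹) ^ j) := by
        gcongr; exact hS j
    _ = _ := by ring

lemma hasSum_zetaDiscTerm (k : ℕ) {z : ℂ} (hz : ‖z‖ < 1) :
    HasSum (zetaDiscTerm k z) (zetaDisc k z) := by
  have h1 := one_add_ne_zero_of_norm_lt_one hz
  have hrow : ∀ j, HasSum (fun i => zetaDiscTerm k z (j, i))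
      ((-1) ^ k * ((-1) ^ j * ((lam k j / j.factorial : ℝ) : ℂ) * z ^ j *
        ((1 + z) ^ k * ((1 + z) ^ j)⁻¹))) := fun j => by
    simp only [zetaDiscTerm]
    exact ((hasSum_binomCoeff k j hz).mul_left _).mul_left _
  have hcol := (summable_zetaDiscTerm k hz).hasSum.prod_fiberwise hrow
  have hshift : (1 + z)⁻¹ - 1 = -1 * z * (1 + z)⁻¹ := by field_simp; ring
  have hexp := ((hasSum_zetaPowAux k (1 + z)⁻¹).mul_left ((1 + z) ^ k)).mul_left ((-1) ^ k)
  have hterms : ∀ j : ℕ, (-1) ^ k * ((-1) ^ j * ((lam k j / j.factorial : ℝ) : ℂ) * z ^ j *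
      ((1 + z) ^ k * ((1 + z) ^ j)⁻¹)) =
      (-1) ^ k * ((1 + z) ^ k * (((lam k j / j.factorial : ℝ) : ℂ) * ((1 + z)⁻¹ - 1) ^ j)) := by
    intro j
    rw [hshift, mul_pow, mul_pow, inv_pow]
    ring
  rw [funext hterms] at hcol
  have hval := hcol.unique hexp
  rw [zetaDisc, ← hval]
  exact (summable_zetaDiscTerm k hz).hasSum

lemma hasSum_zetaDisc (k : ℕ) {z : ℂ} (hz : ‖z‖ < 1) :
    HasSum (fun m : ℕ => (ell k ((m : ℤ) - k) : ℂ) * z ^ m) (zetaDisc k z) := by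
  convert! hasSum_sum_range_of_hasSum_prod (hasSum_zetaDiscTerm k hz) using 2 with m
  rw [ell_sub_eq]
  push_cast
  rw [mul_assoc, Finset.sum_mul, Finset.mul_sum]
  refine Finset.sum_congr rfl fun j hj => ?_
  have hj' : j ≤ m := by simpa [Nat.lt_succ_iff] using hj
  conv_lhs => rw [← Nat.add_sub_of_le hj', pow_add]
  rw [show j + (m - j) - j = m - j by omega, zetaDiscTerm]
  push_cast
  ring

theorem stmt2 (k : ℕ) (hk : 0 < k)
    (h : Summable fun m : ℕ => (ell k ((m : ℤ) - k)) ^ 2) (t : ℝ) :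
    Tendsto (fun N : ℕ => ∑ m ∈ Finset.range N,
        (ell k ((m : ℤ) - k) : ℂ) *
          ((1 / 2 - t * Complex.I) / (1 / 2 + t * Complex.I)) ^ ((m : ℤ) - k))
      atTop (𝓝 (riemannZeta (1 / 2 + t * Complex.I) ^ k)) := by
  set s : ℂ := 1 / 2 + t * Complex.I with hs
  have hs0 : s ≠ 0 := fun h0 => by simpa [hs] using congrArg Complex.re h0
  have hs1 : s ≠ 1 := fun h0 => by
    have := congrArg Complex.re h0
    norm_num [hs] at this
  set w : ℂ := (1 / 2 - t * Complex.I) / s with hw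
  have hws : w = (1 - s) / s := by rw [hw, hs]; ring
  have hw0 : w ≠ 0 := by
    rw [hws]; exact div_ne_zero (sub_ne_zero.2 hs1.symm) hs0
  have hw1 : 1 + w = s⁻¹ := by rw [hws]; field_simp; ring
  have hwn : ‖w‖ = 1 := by
    have hconj : (1 / 2 - t * Complex.I : ℂ) = starRingEnd ℂ s := by
      apply Complex.ext <;> simp [hs]
    rw [hw, hconj, norm_div, Complex.norm_conj, div_self (norm_ne_zero_iff.2 hs0)]
  have key := tendsto_sum_of_summable_sq (a := fun m : ℕ => (ell k ((m : ℤ) - k) : ℂ)) hwn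
    (fun z hz => hasSum_zetaDisc k hz)
    (fun z hz => (differentiableAt_zetaDisc k
      (one_add_ne_zero_of_norm_lt_one (mem_ball_zero_iff.1 hz))).continuousAt.continuousWithinAt)
    (by simpa using h) (differentiableAt_zetaDisc k (by rw [hw1]; exact inv_ne_zero hs0))
  have hval : zetaDisc k w = w ^ k * riemannZeta s ^ k := by
    rw [zetaDisc, hw1, inv_inv, zetaPowAux, Function.update_of_ne hs1, ← mul_pow, ← mul_pow,
      ← mul_pow, hws]
    ring
  have := key.mul_const (w ^ k)⁻¹
  rw [hval, mul_right_comm, mul_inv_cancel₀ (pow_ne_zero k hw0), one_mul] at this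
  refine this.congr fun N => ?_
  rw [Finset.sum_mul]
  refine Finset.sum_congr rfl fun m _ => ?_
  rw [zpow_sub₀ hw0, zpow_natCast, zpow_natCast, div_eq_mul_inv, mul_assoc]
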